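/- For every multi-level apportionment instance, every non-negative integer h, and every tie-breaking, the allocation of h seats produced by the multi-level Adams' method fulfills upper quota. Moreover, the method satisfies house monotonicity: when the total number of seats increases from h to h+1, every node receives at least as many seats as before. -/

import Mathlib

/-- A multi-level apportionment instance: a rooted tree on nodes `0, …, n`
(root `0`, encoded by a parent function with `parent i < i` for `i ≠ 0`),
together with entitlements `W`. -/
structure MLA where
  n : ℕ
  parent : Fin (n + 1) → Fin (n + 1)
  parent_lt : ∀ i : Fin (n + 1), i ≠ 0 → (parent i : ℕ) < (i : ℕ)
  W : Fin (n + 1) → ℝ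
  W_pos : ∀ i, 0 < W i
  W_le_one : ∀ i, W i ≤ 1
  W_root : W 0 = 1
  W_sum : ∀ i : Fin (n + 1),
    (Finset.univ.filter (fun c => c ≠ 0 ∧ parent c = i)).Nonempty →
    ∑ c ∈ Finset.univ.filter (fun c => c ≠ 0 ∧ parent c = i), W c = 1

namespace MLA

variable (T : MLA)

/-- The set of children of node `i`. -/
def children (i : Fin (T.n + 1)) : Finset (Fin (T.n + 1)) :=
  Finset.univ.filter (fun c => c ≠ 0 ∧ T.parent c = i)

/-- The ancestor set `A(i)`: `A(0) = {0}` and `A(i) = {parent i} ∪ A(parent i)`. -/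
def ancestors (i : Fin (T.n + 1)) : Finset (Fin (T.n + 1)) :=
  if h : i = 0 then {0} else insert (T.parent i) (ancestors (T.parent i))
termination_by (i : ℕ)
decreasing_by exact T.parent_lt i h

/-- The entitlement of node `i` relative to the root: `R i = ∏_{a ∈ A(i) ∪ {i}} W a`. -/
def R (i : Fin (T.n + 1)) : ℝ := ∏ a ∈ insert i (T.ancestors i), T.W a

/-- `V` is an allocation of `h` seats. -/
def IsAlloc (h : ℕ) (V : Fin (T.n + 1) → ℕ) : Prop :=
  V 0 = h ∧ ∀ i, (T.children i).Nonempty → V i = ∑ c ∈ T.children i, V c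

/-- `V` fulfills lower quota: `V i ≥ LQ i = max_{a ∈ A(i)} ⌊(R i / R a) · V a⌋`. -/
def FulfillsLowerQuota (V : Fin (T.n + 1) → ℕ) : Prop :=
  ∀ i, ∀ a ∈ T.ancestors i, ⌊T.R i / T.R a * (V a : ℝ)⌋ ≤ (V i : ℤ)

/-- `V` fulfills upper quota: `V i ≤ UQ i = min_{a ∈ A(i)} ⌈(R i / R a) · V a⌉`. -/
def FulfillsUpperQuota (V : Fin (T.n + 1) → ℕ) : Prop :=
  ∀ i, ∀ a ∈ T.ancestors i, (V i : ℤ) ≤ ⌈T.R i / T.R a * (V a : ℝ)⌉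


/-- `P` is the set of nodes receiving the new seat in one step of an iterative
method with selection criterion `crit` (to be minimized among children) and
eligibility constraint `elig`: `P` is a root-to-leaf path, each non-root node on
the path is an eligible child of its parent minimizing `crit` among all eligible
children, and the seat counts along `P` each increase by one. -/
def IsStepWith (crit : (Fin (T.n + 1) → ℕ) → Fin (T.n + 1) → ℝ)
    (elig : (Fin (T.n + 1) → ℕ) → Fin (T.n + 1) → Prop)
    (P : Finset (Fin (T.n + 1))) (Vh Vh1 : Fin (T.n + 1) → ℕ) : Prop :=
  (0 : Fin (T.n + 1)) ∈ P ∧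
  (∀ i ∈ P, i ≠ 0 → T.parent i ∈ P) ∧
  (∀ i ∈ P, (T.children i).Nonempty → ∃ c ∈ T.children i, c ∈ P) ∧
  (∀ c ∈ P, ∀ d ∈ P, c ≠ 0 → d ≠ 0 → T.parent c = T.parent d → c = d) ∧
  (∀ c ∈ P, c ≠ 0 → elig Vh c ∧
    ∀ d ∈ T.children (T.parent c), elig Vh d → crit Vh c ≤ crit Vh d) ∧
  (∀ i, Vh1 i = Vh i + if i ∈ P then 1 else 0)

/-- `V : ℕ → (nodes → ℕ)` is a run of the iterative method given by `crit` and
`elig` (with arbitrary tie-breaking): `V 0` is the all-zero allocation and each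
`V (h+1)` is obtained from `V h` by allocating one more seat along a path. -/
def IsRun (crit : (Fin (T.n + 1) → ℕ) → Fin (T.n + 1) → ℝ)
    (elig : (Fin (T.n + 1) → ℕ) → Fin (T.n + 1) → Prop)
    (V : ℕ → Fin (T.n + 1) → ℕ) : Prop :=
  (∀ i, V 0 i = 0) ∧ ∀ h, ∃ P, T.IsStepWith crit elig P (V h) (V (h + 1))

/-- Adams' criterion: a child `c` minimizing `V c / R c` receives the seat. -/
noncomputable def adamsCrit (V : Fin (T.n + 1) → ℕ) (c : Fin (T.n + 1)) : ℝ :=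
  (V c : ℝ) / T.R c

/-- Jefferson's criterion: a child `c` minimizing `(V c + 1) / R c` receives the seat. -/
noncomputable def jeffersonCrit (V : Fin (T.n + 1) → ℕ) (c : Fin (T.n + 1)) : ℝ :=
  ((V c : ℝ) + 1) / T.R c

/-- Trivial eligibility constraint: every child is eligible. -/
def trivElig (_ : Fin (T.n + 1) → ℕ) (_ : Fin (T.n + 1)) : Prop := True

/-- Eligibility constraint of the quota method: `V c / W c < V (parent c) + 1`. -/
def quotaElig (V : Fin (T.n + 1) → ℕ) (c : Fin (T.n + 1)) : Prop :=
  (V c : ℝ) / T.W c < (V (T.parent c) : ℝ) + 1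

/-- Eligibility constraint of the upper-compliant quota method:
`V c / R c < (V a + 1) / R a` for every ancestor `a` of `c`. -/
def ucElig (V : Fin (T.n + 1) → ℕ) (c : Fin (T.n + 1)) : Prop :=
  ∀ a ∈ T.ancestors c, (V c : ℝ) / T.R c < ((V a : ℝ) + 1) / T.R a

end MLA

/-!
By averaging over siblings, a child minimizing `V c / R c` satisfies
`V c / R c ≤ V p / R p` for its parent `p`, because `V p` and `R p` are the sums of `V` and `R`
over the children of `p`. Chaining these inequalities up the path of the new seat shows that every
node `i` about to receive it satisfies `V i ≤ (R i / R a) * V a` for each ancestor `a`, so that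
`V i + 1` is within the quota computed from `V a + 1`. At the other nodes the quota can only grow.
-/

lemma le_sum_div_sum_of_forall_le_div {ι K : Type*} [Field K] [LinearOrder K]
    [IsStrictOrderedRing K] {s : Finset ι} {f g : ι → K} {r : K} (hs : s.Nonempty)
    (hg : ∀ i ∈ s, 0 < g i) (hr : ∀ i ∈ s, r ≤ f i / g i) :
    r ≤ (∑ i ∈ s, f i) / ∑ i ∈ s, g i := by
  rw [le_div_iff₀ (Finset.sum_pos hg hs), Finset.mul_sum]
  exact Finset.sum_le_sum fun i hi => (le_div_iff₀ (hg i hi)).1 (hr i hi)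

namespace MLA

variable {T : MLA}

lemma mem_children {c i : Fin (T.n + 1)} : c ∈ T.children i ↔ c ≠ 0 ∧ T.parent c = i := by
  simp [children]

lemma mem_children_parent {c : Fin (T.n + 1)} (hc : c ≠ 0) : c ∈ T.children (T.parent c) :=
  mem_children.2 ⟨hc, rfl⟩

lemma ancestors_zero : T.ancestors 0 = {0} := by
  rw [ancestors, dif_pos rfl]

lemma ancestors_of_ne_zero {i : Fin (T.n + 1)} (hi : i ≠ 0) :
    T.ancestors i = insert (T.parent i) (T.ancestors (T.parent i)) := by
  rw [ancestors, dif_neg hi]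

lemma ancestors_induction {p : Fin (T.n + 1) → Prop} {i : Fin (T.n + 1)} (self : p i)
    (parent : ∀ j, j ≠ 0 → p j → p (T.parent j)) {a : Fin (T.n + 1)}
    (ha : a ∈ T.ancestors i) : p a := by
  induction i using WellFoundedLT.induction with
  | ind i ih =>
    by_cases hi : i = 0
    · subst hi
      rw [ancestors_zero, Finset.mem_singleton] at ha
      exact ha ▸ self
    · rw [ancestors_of_ne_zero hi, Finset.mem_insert] at ha
      rcases ha with rfl | ha
      · exact parent i hi self
      · exact ih (T.parent i) (T.parent_lt i hi) (parent i hi self) ha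

lemma le_of_mem_ancestors {i a : Fin (T.n + 1)} (ha : a ∈ T.ancestors i) : a ≤ i :=
  ancestors_induction (p := (· ≤ i)) le_rfl
    (fun j hj hji => (Fin.lt_def.2 (T.parent_lt j hj)).le.trans hji) ha

lemma R_pos (i : Fin (T.n + 1)) : 0 < T.R i :=
  Finset.prod_pos fun a _ => T.W_pos a

lemma R_eq_W_mul_R_parent {i : Fin (T.n + 1)} (hi : i ≠ 0) :
    T.R i = T.W i * T.R (T.parent i) := by
  have parent_lt : T.parent i < i := T.parent_lt i hi
  have notMem : i ∉ insert (T.parent i) (T.ancestors (T.parent i)) := by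
    rw [Finset.mem_insert, not_or]
    exact ⟨parent_lt.ne', fun h => (le_of_mem_ancestors h).not_gt parent_lt⟩
  rw [R, ancestors_of_ne_zero hi, Finset.prod_insert notMem, R]

lemma sum_children_R {i : Fin (T.n + 1)} (hi : (T.children i).Nonempty) :
    ∑ c ∈ T.children i, T.R c = T.R i :=
  calc ∑ c ∈ T.children i, T.R c
    _ = ∑ c ∈ T.children i, T.W c * T.R i := Finset.sum_congr rfl fun c hc => by
        obtain ⟨hc0, rfl⟩ := mem_children.1 hc
        exact R_eq_W_mul_R_parent hc0
    _ = (∑ c ∈ T.children i, T.W c) * T.R i := (Finset.sum_mul ..).symm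
    _ = T.R i := by rw [children, T.W_sum i hi, one_mul]

section Step

variable {crit : (Fin (T.n + 1) → ℕ) → Fin (T.n + 1) → ℝ}
  {elig : (Fin (T.n + 1) → ℕ) → Fin (T.n + 1) → Prop}
  {P : Finset (Fin (T.n + 1))} {U U' : Fin (T.n + 1) → ℕ}

lemma IsStepWith.apply_eq (hstep : T.IsStepWith crit elig P U U') (i : Fin (T.n + 1)) :
    U' i = U i + if i ∈ P then 1 else 0 :=
  hstep.2.2.2.2.2 i

lemma IsStepWith.le (hstep : T.IsStepWith crit elig P U U') : U ≤ U' := fun i =>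
  hstep.apply_eq i ▸ Nat.le_add_right _ _

lemma IsStepWith.sum_children_ite (hstep : T.IsStepWith crit elig P U U') {i : Fin (T.n + 1)}
    (hi : (T.children i).Nonempty) :
    ∑ c ∈ T.children i, (if c ∈ P then 1 else 0) = if i ∈ P then 1 else 0 := by
  obtain ⟨-, parent_mem, exists_child, child_unique, -, -⟩ := hstep
  by_cases hiP : i ∈ P
  · obtain ⟨c, hc, hcP⟩ := exists_child i hiP hi
    obtain ⟨hc0, hci⟩ := mem_children.1 hc
    have mem_iff : ∀ d ∈ T.children i, d ∈ P ↔ d = c := fun d hd => by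
      obtain ⟨hd0, hdi⟩ := mem_children.1 hd
      exact ⟨fun hdP => child_unique d hdP c hcP hd0 hc0 (hdi.trans hci.symm), fun h => h ▸ hcP⟩
    rw [if_pos hiP, Finset.sum_congr rfl fun d hd => if_congr (mem_iff d hd) rfl rfl,
      Finset.sum_ite_eq', if_pos hc]
  · rw [if_neg hiP]
    refine Finset.sum_eq_zero fun d hd => if_neg fun hdP => hiP ?_
    obtain ⟨hd0, rfl⟩ := mem_children.1 hd
    exact parent_mem d hdP hd0

lemma IsStepWith.isAlloc {h : ℕ} (hstep : T.IsStepWith crit elig P U U')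
    (hU : T.IsAlloc h U) : T.IsAlloc (h + 1) U' := by
  refine ⟨by rw [hstep.apply_eq, if_pos hstep.1, hU.1], fun i hi => ?_⟩
  simp only [hstep.apply_eq, Finset.sum_add_distrib, hstep.sum_children_ite hi, ← hU.2 i hi]

lemma IsStepWith.adamsCrit_le_parent {h : ℕ}
    (hstep : T.IsStepWith T.adamsCrit T.trivElig P U U') (hU : T.IsAlloc h U)
    {c : Fin (T.n + 1)} (hcP : c ∈ P) (hc : c ≠ 0) :
    T.adamsCrit U c ≤ T.adamsCrit U (T.parent c) := by
  obtain ⟨-, -, -, -, minimizes, -⟩ := hstep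
  have siblings : (T.children (T.parent c)).Nonempty := ⟨c, mem_children_parent hc⟩
  calc T.adamsCrit U c
    _ ≤ (∑ d ∈ T.children (T.parent c), (U d : ℝ)) / ∑ d ∈ T.children (T.parent c), T.R d :=
        le_sum_div_sum_of_forall_le_div siblings (fun d _ => R_pos d)
          fun d hd => (minimizes c hcP hc).2 d hd trivial
    _ = T.adamsCrit U (T.parent c) := by
        rw [sum_children_R siblings, adamsCrit, hU.2 _ siblings, Nat.cast_sum]

lemma IsStepWith.mem_and_adamsCrit_le_of_mem_ancestors {h : ℕ}
    (hstep : T.IsStepWith T.adamsCrit T.trivElig P U U') (hU : T.IsAlloc h U)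
    {i a : Fin (T.n + 1)} (hi : i ∈ P) (ha : a ∈ T.ancestors i) :
    a ∈ P ∧ T.adamsCrit U i ≤ T.adamsCrit U a :=
  ancestors_induction (p := fun j => j ∈ P ∧ T.adamsCrit U i ≤ T.adamsCrit U j) ⟨hi, le_rfl⟩
    (fun j hj ⟨hjP, hij⟩ =>
      ⟨hstep.2.1 j hjP hj, hij.trans (hstep.adamsCrit_le_parent hU hjP hj)⟩) ha

lemma IsStepWith.fulfillsUpperQuota {h : ℕ}
    (hstep : T.IsStepWith T.adamsCrit T.trivElig P U U') (hU : T.IsAlloc h U)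
    (hquota : T.FulfillsUpperQuota U) : T.FulfillsUpperQuota U' := by
  intro i a ha
  have ratio_pos : 0 < T.R i / T.R a := div_pos (R_pos i) (R_pos a)
  by_cases hi : i ∈ P
  · obtain ⟨haP, crit_le⟩ := hstep.mem_and_adamsCrit_le_of_mem_ancestors hU hi ha
    have seats_lt : (U i : ℝ) < T.R i / T.R a * U' a :=
      calc (U i : ℝ)
        _ ≤ T.adamsCrit U a * T.R i := (div_le_iff₀ (R_pos i)).1 crit_le
        _ = T.R i / T.R a * U a := by rw [adamsCrit]; ring
        _ < T.R i / T.R a * U' a := by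
          rw [hstep.apply_eq a, if_pos haP]
          gcongr
          exact Nat.lt_succ_self _
    rw [hstep.apply_eq i, if_pos hi, Nat.cast_succ, Int.add_one_le_iff, Int.lt_ceil]
    exact_mod_cast seats_lt
  · calc (U' i : ℤ)
      _ = U i := by rw [hstep.apply_eq, if_neg hi, add_zero]
      _ ≤ ⌈T.R i / T.R a * U a⌉ := hquota i a ha
      _ ≤ ⌈T.R i / T.R a * U' a⌉ := by
        gcongr
        exact hstep.le a

end Step

section Run

variable {crit : (Fin (T.n + 1) → ℕ) → Fin (T.n + 1) → ℝ}
  {elig : (Fin (T.n + 1) → ℕ) → Fin (T.n + 1) → Prop} {V : ℕ → Fin (T.n + 1) → ℕ}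

lemma IsRun.monotone (hrun : T.IsRun crit elig V) : Monotone V :=
  monotone_nat_of_le_succ fun h =>
    let ⟨_, hstep⟩ := hrun.2 h
    hstep.le

lemma IsRun.isAlloc (hrun : T.IsRun crit elig V) (h : ℕ) : T.IsAlloc h (V h) := by
  induction h with
  | zero => exact ⟨hrun.1 0, fun i _ => by simp only [hrun.1, Finset.sum_const_zero]⟩
  | succ h ih =>
    obtain ⟨_, hstep⟩ := hrun.2 h
    exact hstep.isAlloc ih

lemma IsRun.fulfillsUpperQuota (hrun : T.IsRun T.adamsCrit T.trivElig V) (h : ℕ) :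
    T.FulfillsUpperQuota (V h) := by
  induction h with
  | zero =>
    intro i a _
    simp only [hrun.1, Nat.cast_zero, mul_zero, Int.ceil_zero, le_refl]
  | succ h ih =>
    obtain ⟨_, hstep⟩ := hrun.2 h
    exact hstep.fulfillsUpperQuota (hrun.isAlloc h) ih

end Run

end MLA

/-- Any run of the multi-level Adams' method fulfills upper
quota after every number of seats, and satisfies house monotonicity. -/
theorem adams_upper_quota_and_house_monotone (T : MLA) (V : ℕ → Fin (T.n + 1) → ℕ)
    (hrun : T.IsRun T.adamsCrit T.trivElig V) :
    (∀ h : ℕ, T.FulfillsUpperQuota (V h)) ∧ (∀ h : ℕ, ∀ i, V h i ≤ V (h + 1) i) :=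
  ⟨hrun.fulfillsUpperQuota, fun h => hrun.monotone h.le_succ⟩
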